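/- arXiv:2203.10025 — 2 statements merged into one kernel-verified Lean document; each statement's English description precedes it below -/
import Mathlib

section
/- Fix a real k₁ > 0. There exist constants C₁, C₂ > 0 depending only on k₁ such that for all real t with 0 < t ≤ log 2 and all λ > 0 with λ t ≥ 1, one has C₁ (λ t)^(−k₁) ≤ ∫_{1/2}^{1} (1−r)^(k₁−1) e^(−λ (t − log(cosh t + r sinh t))) dr ≤ C₂ (λ t)^(−k₁). -/
open MeasureTheory Real

/-!
Put `s = 1 - r`. Since `cosh t + r sinh t = e ^ t - s sinh t`, the inequality `log x ≤ x - 1`,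
applied to `(cosh t + r sinh t) / e ^ t` and to its inverse, squeezes the phase
`t - log (cosh t + r sinh t)` between two multiples of `s t`, uniformly for bounded `t`. The
integral is therefore comparable to `∫ s ^ (k - 1) e ^ (-c l t s) ds`: extending it to `(0, ∞)`
gives the Gamma integral as an upper bound, and restricting it to `s ≲ 1 / (l t)`, where the
exponential is bounded below, gives the lower bound.
-/

section LaplaceIntegral

variable {k b c m : ℝ} {φ : ℝ → ℝ}

lemma integral_rpow_mul_exp_neg_le_Gamma (hk : 0 < k) (hb : 0 ≤ b) (hc : 0 < c)
    (hφ : ∀ s ∈ Set.Ioc 0 b, c * s ≤ φ s) :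
    ∫ s in (0 : ℝ)..b, s ^ (k - 1) * exp (-φ s) ≤ Gamma k * c ^ (-k) := by
  have h_int : IntegrableOn (fun s ↦ s ^ (k - 1) * exp (-(c * s))) (Set.Ioi 0) := by
    simpa only [rpow_one, neg_mul] using
      integrableOn_rpow_mul_exp_neg_mul_rpow (by linarith : -1 < k - 1) one_pos hc
  calc ∫ s in (0 : ℝ)..b, s ^ (k - 1) * exp (-φ s)
      = ∫ s in Set.Ioc 0 b, s ^ (k - 1) * exp (-φ s) := intervalIntegral.integral_of_le hb
    _ ≤ ∫ s in Set.Ioc 0 b, s ^ (k - 1) * exp (-(c * s)) := by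
        refine integral_mono_of_nonneg ?_ (h_int.mono_set Set.Ioc_subset_Ioi_self) ?_ <;>
          filter_upwards [ae_restrict_mem measurableSet_Ioc] with s hs
        · exact mul_nonneg (rpow_nonneg hs.1.le _) (exp_nonneg _)
        · have := rpow_nonneg hs.1.le (k - 1)
          gcongr
          exact hφ s hs
    _ ≤ ∫ s in Set.Ioi 0, s ^ (k - 1) * exp (-(c * s)) := by
        refine setIntegral_mono_set h_int ?_ Set.Ioc_subset_Ioi_self.eventuallyLE
        filter_upwards [ae_restrict_mem measurableSet_Ioi] with s hs
        exact mul_nonneg (rpow_nonneg (le_of_lt hs) _) (exp_nonneg _)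
    _ = Gamma k * c ^ (-k) := by
        rw [integral_rpow_mul_exp_neg_mul_Ioi hk hc, one_div, inv_rpow hc.le, rpow_neg hc.le,
          mul_comm]

lemma intervalIntegrable_rpow_mul_exp_neg (hk : 0 < k) (hφ : ContinuousOn φ (Set.uIcc 0 b)) :
    IntervalIntegrable (fun s ↦ s ^ (k - 1) * exp (-φ s)) volume 0 b :=
  (intervalIntegral.intervalIntegrable_rpow' (by linarith)).mul_continuousOn hφ.neg.rexp

lemma le_integral_rpow_mul_exp_neg_of_le {M : ℝ} (hk : 0 < k) (hb : 0 ≤ b)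
    (hφ_cont : ContinuousOn φ (Set.Icc 0 b)) (hφ : ∀ s ∈ Set.Icc 0 b, φ s ≤ M) :
    b ^ k / k * exp (-M) ≤ ∫ s in (0 : ℝ)..b, s ^ (k - 1) * exp (-φ s) := by
  rw [← Set.uIcc_of_le hb] at hφ_cont
  calc b ^ k / k * exp (-M) = ∫ s in (0 : ℝ)..b, s ^ (k - 1) * exp (-M) := by
        rw [intervalIntegral.integral_mul_const, integral_rpow (Or.inl (by linarith)),
          sub_add_cancel, zero_rpow hk.ne', sub_zero]
    _ ≤ ∫ s in (0 : ℝ)..b, s ^ (k - 1) * exp (-φ s) := by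
        refine intervalIntegral.integral_mono_on hb
          (intervalIntegrable_rpow_mul_exp_neg hk continuousOn_const)
          (intervalIntegrable_rpow_mul_exp_neg hk hφ_cont) fun s hs ↦ ?_
        have := rpow_nonneg hs.1 (k - 1)
        gcongr
        exact hφ s hs

lemma le_integral_rpow_mul_exp_neg_of_le_mul (hk : 0 < k) (hb : 0 ≤ b) (hc : 0 ≤ c) (hm : 1 ≤ m)
    (hφ_cont : ContinuousOn φ (Set.Icc 0 b)) (hφ : ∀ s ∈ Set.Icc 0 b, φ s ≤ c * m * s) :
    b ^ k / k * exp (-(c * b)) * m ^ (-k) ≤ ∫ s in (0 : ℝ)..b, s ^ (k - 1) * exp (-φ s) := by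
  have hm₀ : 0 < m := by linarith
  have hbm : b / m ≤ b := div_le_self hb hm
  have h_subset : Set.Icc 0 (b / m) ⊆ Set.Icc 0 b := Set.Icc_subset_Icc_right hbm
  have hφ_le : ∀ s ∈ Set.Icc 0 (b / m), φ s ≤ c * b := fun s hs ↦
    calc φ s ≤ c * m * s := hφ s (h_subset hs)
      _ ≤ c * m * (b / m) := by gcongr; exact hs.2
      _ = c * b := by field_simp
  calc b ^ k / k * exp (-(c * b)) * m ^ (-k) = (b / m) ^ k / k * exp (-(c * b)) := by
        rw [div_rpow hb hm₀.le, rpow_neg hm₀.le]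
        ring
    _ ≤ ∫ s in (0 : ℝ)..(b / m), s ^ (k - 1) * exp (-φ s) :=
        le_integral_rpow_mul_exp_neg_of_le hk (by positivity) (hφ_cont.mono h_subset) hφ_le
    _ ≤ ∫ s in (0 : ℝ)..b, s ^ (k - 1) * exp (-φ s) := by
        refine intervalIntegral.integral_mono_interval le_rfl (by positivity) hbm ?_
          (intervalIntegrable_rpow_mul_exp_neg hk (by rwa [Set.uIcc_of_le hb]))
        filter_upwards [ae_restrict_mem measurableSet_Ioc] with s hs
        exact mul_nonneg (rpow_nonneg hs.1.le _) (exp_nonneg _)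

end LaplaceIntegral

section Phase

variable {t T r : ℝ}

lemma sinh_le_exp_mul_self (t : ℝ) : sinh t ≤ exp t * t := by
  have h_exp : exp t * exp (-(2 * t)) = exp (-t) := by
    rw [← exp_add]
    ring_nf
  calc sinh t = exp t * ((1 - exp (-(2 * t))) / 2) := by
        rw [sinh_eq]
        linear_combination h_exp / 2
    _ ≤ exp t * t := by
        gcongr
        linarith [one_sub_le_exp_neg (2 * t)]

lemma exp_neg_le_cosh_add_mul_sinh (ht : 0 ≤ t) (hr : -1 ≤ r) :
    exp (-t) ≤ cosh t + r * sinh t := by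
  rw [← cosh_sub_sinh]
  nlinarith [sinh_nonneg_iff.2 ht]

lemma cosh_add_mul_sinh_pos (ht : 0 ≤ t) (hr : -1 ≤ r) : 0 < cosh t + r * sinh t :=
  (exp_pos _).trans_le (exp_neg_le_cosh_add_mul_sinh ht hr)

lemma mul_le_sub_log_cosh_add_mul_sinh (ht : 0 ≤ t) (htT : t ≤ T) (hr : -1 ≤ r) (hr' : r ≤ 1) :
    exp (-T) * t * (1 - r) ≤ t - log (cosh t + r * sinh t) := by
  have hX := cosh_add_mul_sinh_pos ht hr
  have h_inv : exp (-t) * (cosh t + sinh t) = 1 := by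
    rw [cosh_add_sinh, ← exp_add, neg_add_cancel, exp_zero]
  have h_sinh : t ≤ sinh t := self_le_sinh_iff.2 ht
  have : 0 ≤ 1 - r := by linarith
  calc exp (-T) * t * (1 - r) ≤ exp (-t) * sinh t * (1 - r) := by gcongr
    _ = 1 - exp (-t) * (cosh t + r * sinh t) := by linear_combination h_inv
    _ ≤ -log (exp (-t) * (cosh t + r * sinh t)) := by
        linarith [log_le_sub_one_of_pos (mul_pos (exp_pos (-t)) hX)]
    _ = t - log (cosh t + r * sinh t) := by
        rw [log_mul (exp_ne_zero _) hX.ne', log_exp]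
        ring

lemma sub_log_cosh_add_mul_sinh_le_mul (ht : 0 ≤ t) (htT : t ≤ T) (hr : -1 ≤ r) (hr' : r ≤ 1) :
    t - log (cosh t + r * sinh t) ≤ exp (2 * T) * t * (1 - r) := by
  have hX := cosh_add_mul_sinh_pos ht hr
  have h_inv : (cosh t + r * sinh t)⁻¹ ≤ exp t := by
    rw [inv_le_comm₀ hX (exp_pos t), ← exp_neg]
    exact exp_neg_le_cosh_add_mul_sinh ht hr
  have : 0 ≤ sinh t := sinh_nonneg_iff.2 ht
  have : 0 ≤ 1 - r := by linarith
  calc t - log (cosh t + r * sinh t) = log (exp t / (cosh t + r * sinh t)) := by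
        rw [log_div (exp_ne_zero t) hX.ne', log_exp]
    _ ≤ exp t / (cosh t + r * sinh t) - 1 :=
        log_le_sub_one_of_pos (div_pos (exp_pos t) hX)
    _ = (cosh t + r * sinh t)⁻¹ * sinh t * (1 - r) := by
        rw [← cosh_add_sinh, div_sub_one hX.ne', div_eq_inv_mul]
        ring
    _ ≤ exp t * (exp t * t) * (1 - r) := by gcongr; exact sinh_le_exp_mul_self t
    _ = exp (2 * t) * t * (1 - r) := by rw [two_mul, exp_add]; ring
    _ ≤ exp (2 * T) * t * (1 - r) := by gcongr

lemma continuousOn_log_cosh_add_mul_sinh (ht : 0 ≤ t) :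
    ContinuousOn (fun r ↦ log (cosh t + r * sinh t)) (Set.Ici (-1)) :=
  ContinuousOn.log (by fun_prop) fun _ hr ↦ (cosh_add_mul_sinh_pos ht hr).ne'

end Phase

theorem stmt_15_general {k a : ℝ} (hk : 0 < k) (ha : -1 ≤ a) (ha' : a < 1) (T : ℝ) :
    ∃ C₁ C₂ : ℝ, 0 < C₁ ∧ 0 < C₂ ∧ ∀ t l : ℝ, 0 < t → t ≤ T → 1 ≤ l * t →
      C₁ * (l * t) ^ (-k) ≤
          (∫ r in a..1, (1 - r) ^ (k - 1) * exp (-(l * (t - log (cosh t + r * sinh t))))) ∧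
        (∫ r in a..1, (1 - r) ^ (k - 1) * exp (-(l * (t - log (cosh t + r * sinh t))))) ≤
          C₂ * (l * t) ^ (-k) := by
  have hb : 0 < 1 - a := by linarith
  refine ⟨(1 - a) ^ k / k * exp (-(exp (2 * T) * (1 - a))), Gamma k * exp (-T) ^ (-k),
    by positivity, mul_pos (Gamma_pos_of_pos hk) (by positivity), fun t l ht htT hlt ↦ ?_⟩
  have hlt₀ : 0 < l * t := by linarith
  have hl : 0 ≤ l := (pos_of_mul_pos_left hlt₀ ht.le).le
  set φ : ℝ → ℝ := fun s ↦ l * (t - log (cosh t + (1 - s) * sinh t)) with hφ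
  have h_subst : ∫ r in a..1, (1 - r) ^ (k - 1) * exp (-(l * (t - log (cosh t + r * sinh t)))) =
      ∫ s in (0 : ℝ)..(1 - a), s ^ (k - 1) * exp (-φ s) := by
    simpa only [hφ, sub_sub_cancel, sub_self] using
      intervalIntegral.integral_comp_sub_left (a := a) (b := 1)
        (fun s ↦ s ^ (k - 1) * exp (-φ s)) 1
  have h_range : ∀ s ∈ Set.Icc 0 (1 - a), -1 ≤ 1 - s ∧ 1 - s ≤ 1 := fun s hs ↦
    ⟨by linarith [hs.2], by linarith [hs.1]⟩
  have h_lower : ∀ s ∈ Set.Icc 0 (1 - a), exp (-T) * (l * t) * s ≤ φ s := fun s hs ↦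
    calc exp (-T) * (l * t) * s = l * (exp (-T) * t * (1 - (1 - s))) := by ring
      _ ≤ φ s := mul_le_mul_of_nonneg_left
        (mul_le_sub_log_cosh_add_mul_sinh ht.le htT (h_range s hs).1 (h_range s hs).2) hl
  have h_upper : ∀ s ∈ Set.Icc 0 (1 - a), φ s ≤ exp (2 * T) * (l * t) * s := fun s hs ↦
    calc φ s ≤ l * (exp (2 * T) * t * (1 - (1 - s))) := mul_le_mul_of_nonneg_left
          (sub_log_cosh_add_mul_sinh_le_mul ht.le htT (h_range s hs).1 (h_range s hs).2) hl
      _ = exp (2 * T) * (l * t) * s := by ring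
  have h_cont : ContinuousOn φ (Set.Icc 0 (1 - a)) :=
    continuousOn_const.mul <| continuousOn_const.sub <|
      (continuousOn_log_cosh_add_mul_sinh ht.le).comp (by fun_prop) fun s hs ↦ (h_range s hs).1
  rw [h_subst]
  refine ⟨le_integral_rpow_mul_exp_neg_of_le_mul hk hb.le (exp_nonneg _) hlt h_cont h_upper, ?_⟩
  rw [mul_assoc, ← mul_rpow (exp_nonneg _) hlt₀.le]
  exact integral_rpow_mul_exp_neg_le_Gamma hk hb.le (by positivity)
    fun s hs ↦ h_lower s (Set.Ioc_subset_Icc_self hs)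

theorem stmt_15 (k₁ : ℝ) (hk₁ : 0 < k₁) :
    ∃ C₁ C₂ : ℝ, 0 < C₁ ∧ 0 < C₂ ∧ ∀ t l : ℝ, 0 < t → t ≤ Real.log 2 → 0 < l →
      1 ≤ l * t →
      C₁ * (l * t) ^ (-k₁) ≤
          (∫ r in (1/2 : ℝ)..1, (1 - r) ^ (k₁ - 1) *
            Real.exp (-(l * (t - Real.log (Real.cosh t + r * Real.sinh t))))) ∧
        (∫ r in (1/2 : ℝ)..1, (1 - r) ^ (k₁ - 1) *
            Real.exp (-(l * (t - Real.log (Real.cosh t + r * Real.sinh t))))) ≤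
          C₂ * (l * t) ^ (-k₁) := by
  obtain ⟨C₁, C₂, hC₁, hC₂, h⟩ :=
    stmt_15_general hk₁ (a := 1 / 2) (by norm_num) (by norm_num) (log 2)
  exact ⟨C₁, C₂, hC₁, hC₂, fun t l ht htT _ hlt ↦ h t l ht htT hlt⟩
end

section
/- Let a₀ ≥ 0, b₀ ≥ 0 and c₀ > 0 be real numbers. Let a, b, c, w be real numbers with |a| ≤ a₀, |b| ≤ b₀, c ≥ c₀ and 0 ≤ w ≤ 1/2. Define the Gauss hypergeometric series F(a, b; c; w) = Σ_{n=0}^∞ ((a)ₙ (b)ₙ / ((c)ₙ n!)) wⁿ, where (x)ₙ = x(x+1)⋯(x+n−1) is the rising factorial (Pochhammer symbol). Then |F(a, b; c; w) − 1| ≤ (a₀ b₀ / c₀) · F(a₀+1, b₀+1; c₀+1; 1/2) · w. -/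
open Finset

/-- The rising factorial (Pochhammer symbol) `(x)ₙ = x (x+1) ⋯ (x+n-1)`. -/
noncomputable def poch (x : ℝ) (n : ℕ) : ℝ := ∏ i ∈ Finset.range n, (x + i)

/-- The Gauss hypergeometric series `₂F₁(a, b; c; w)`. -/
noncomputable def gaussF (a b c w : ℝ) : ℝ :=
  ∑' n : ℕ, poch a n * poch b n / (poch c n * n.factorial) * w ^ n

/-!
The coefficients satisfy `tₙ₊₁(a, b, c) = (ab / c) tₙ(a + 1, b + 1, c + 1) / (n + 1)`, so removing
the constant term and discarding the factor `1 / (n + 1)` leaves `(ab / c) w` times a shifted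
hypergeometric series. Since `‖a + i‖ ≤ a₀ + i`, `‖b + i‖ ≤ b₀ + i` and `c₀ + i ≤ ‖c + i‖`, that
series is majorized termwise by the one with parameters `a₀ + 1`, `b₀ + 1`, `c₀ + 1`.
-/

section ascPochhammer

open Polynomial

theorem ascPochhammer_eval_succ_left {S : Type*} [CommSemiring S] (x : S) (n : ℕ) :
    (ascPochhammer S (n + 1)).eval x = x * (ascPochhammer S n).eval (x + 1) := by
  simp only [ascPochhammer_succ_left, eval_mul, eval_comp, eval_add, eval_X, eval_one]

theorem norm_ascPochhammer_eval_le {R : Type*} [SeminormedRing R] [NormOneClass R]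
    {x : R} {x₀ : ℝ} (hx : ‖x‖ ≤ x₀) (n : ℕ) :
    ‖(ascPochhammer R n).eval x‖ ≤ (ascPochhammer ℝ n).eval x₀ := by
  induction n with
  | zero => simp
  | succ n ih =>
    have hfactor : ‖x + n‖ ≤ x₀ + n :=
      (norm_add_le _ _).trans (add_le_add hx (n.norm_cast_le.trans_eq (by simp)))
    rw [ascPochhammer_succ_eval, ascPochhammer_succ_eval]
    exact (norm_mul_le _ _).trans
      (mul_le_mul ih hfactor (norm_nonneg _) ((norm_nonneg _).trans ih))

theorem ascPochhammer_eval_le_norm {𝕂 : Type*} [RCLike 𝕂] {x : 𝕂} {x₀ : ℝ} (hx₀ : 0 ≤ x₀)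
    (hx : x₀ ≤ RCLike.re x) (n : ℕ) :
    (ascPochhammer ℝ n).eval x₀ ≤ ‖(ascPochhammer 𝕂 n).eval x‖ := by
  induction n with
  | zero => simp
  | succ n ih =>
    have hfactor : x₀ + n ≤ ‖x + n‖ :=
      calc x₀ + n ≤ RCLike.re (x + n) := by simpa using hx
        _ ≤ ‖x + n‖ := RCLike.re_le_norm _
    rw [ascPochhammer_succ_eval, ascPochhammer_succ_eval, norm_mul]
    exact mul_le_mul ih hfactor (by positivity) (norm_nonneg _)

theorem poch_eq_ascPochhammer_eval (x : ℝ) (n : ℕ) : poch x n = (ascPochhammer ℝ n).eval x := by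
  induction n with
  | zero => simp [poch]
  | succ n ih => rw [ascPochhammer_succ_eval, ← ih, poch, Finset.prod_range_succ, ← poch]

end ascPochhammer

section Coefficient

theorem ordinaryHypergeometricCoefficient_zero {𝕂 : Type*} [Field 𝕂] (a b c : 𝕂) :
    ordinaryHypergeometricCoefficient a b c 0 = 1 := by
  simp [ordinaryHypergeometricCoefficient]

theorem ordinaryHypergeometricCoefficient_succ {𝕂 : Type*} [Field 𝕂] (a b c : 𝕂) (n : ℕ) :
    ordinaryHypergeometricCoefficient a b c (n + 1) =
      a * b / c * ordinaryHypergeometricCoefficient (a + 1) (b + 1) (c + 1) n / (n + 1) := by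
  simp only [ordinaryHypergeometricCoefficient, ascPochhammer_eval_succ_left, Nat.factorial_succ,
    Nat.cast_mul, Nat.cast_add_one, mul_inv, div_eq_mul_inv]
  ring

theorem ordinaryHypergeometricCoefficient_pos {R : Type*} [Field R] [LinearOrder R]
    [IsStrictOrderedRing R] {a b c : R} (ha : 0 < a) (hb : 0 < b) (hc : 0 < c) (n : ℕ) :
    0 < ordinaryHypergeometricCoefficient a b c n := by
  have := ascPochhammer_pos n a ha
  have := ascPochhammer_pos n b hb
  have := ascPochhammer_pos n c hc
  positivity

variable {𝕂 : Type*} [RCLike 𝕂] {a b c : 𝕂} {a₀ b₀ c₀ : ℝ}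

theorem norm_ordinaryHypergeometricCoefficient_le
    (ha : ‖a‖ ≤ a₀) (hb : ‖b‖ ≤ b₀) (hc₀ : 0 < c₀) (hc : c₀ ≤ RCLike.re c) (n : ℕ) :
    ‖ordinaryHypergeometricCoefficient a b c n‖ ≤
      ordinaryHypergeometricCoefficient a₀ b₀ c₀ n := by
  have hA := norm_ascPochhammer_eval_le ha n
  have hB := norm_ascPochhammer_eval_le hb n
  have hC := ascPochhammer_eval_le_norm hc₀.le hc n
  have hC₀ := ascPochhammer_pos n c₀ hc₀
  have hA₀ := (norm_nonneg _).trans hA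
  have hB₀ := (norm_nonneg _).trans hB
  simp only [ordinaryHypergeometricCoefficient, norm_mul, norm_inv, RCLike.norm_natCast]
  gcongr

theorem norm_ordinaryHypergeometricCoefficient_succ_le
    (ha : ‖a‖ ≤ a₀) (hb : ‖b‖ ≤ b₀) (hc₀ : 0 < c₀) (hc : c₀ ≤ RCLike.re c) (n : ℕ) :
    ‖ordinaryHypergeometricCoefficient a b c (n + 1)‖ ≤
      a₀ * b₀ / c₀ * ordinaryHypergeometricCoefficient (a₀ + 1) (b₀ + 1) (c₀ + 1) n := by
  have ha₀ : 0 ≤ a₀ := (norm_nonneg a).trans ha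
  have hb₀ : 0 ≤ b₀ := (norm_nonneg b).trans hb
  have hpos := ordinaryHypergeometricCoefficient_pos (a := a₀ + 1) (b := b₀ + 1) (c := c₀ + 1)
    (by positivity) (by positivity) (by positivity) n
  calc ‖ordinaryHypergeometricCoefficient a b c (n + 1)‖
      ≤ ordinaryHypergeometricCoefficient a₀ b₀ c₀ (n + 1) :=
        norm_ordinaryHypergeometricCoefficient_le ha hb hc₀ hc _
    _ = a₀ * b₀ / c₀ * ordinaryHypergeometricCoefficient (a₀ + 1) (b₀ + 1) (c₀ + 1) n / (n + 1) :=
        ordinaryHypergeometricCoefficient_succ _ _ _ _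
    _ ≤ a₀ * b₀ / c₀ * ordinaryHypergeometricCoefficient (a₀ + 1) (b₀ + 1) (c₀ + 1) n :=
        div_le_self (mul_nonneg (by positivity) hpos.le) (by simp)

theorem norm_ordinaryHypergeometricCoefficient_succ_smul_pow_le {𝔸 : Type*} [NormedRing 𝔸]
    [NormedAlgebra 𝕂 𝔸] {w : 𝔸} {r : ℝ} (ha : ‖a‖ ≤ a₀) (hb : ‖b‖ ≤ b₀) (hc₀ : 0 < c₀)
    (hc : c₀ ≤ RCLike.re c) (hw : ‖w‖ ≤ r) (n : ℕ) :
    ‖ordinaryHypergeometricCoefficient a b c (n + 1) • w ^ (n + 1)‖ ≤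
      a₀ * b₀ / c₀ * (ordinaryHypergeometricCoefficient (a₀ + 1) (b₀ + 1) (c₀ + 1) n • r ^ n) *
        ‖w‖ := by
  have hcoeff := norm_ordinaryHypergeometricCoefficient_succ_le ha hb hc₀ hc n
  have hpow : ‖w ^ (n + 1)‖ ≤ r ^ n * ‖w‖ :=
    calc ‖w ^ (n + 1)‖ ≤ ‖w‖ ^ (n + 1) := norm_pow_le' w n.succ_pos
      _ = ‖w‖ ^ n * ‖w‖ := pow_succ _ _
      _ ≤ r ^ n * ‖w‖ := by gcongr
  calc ‖ordinaryHypergeometricCoefficient a b c (n + 1) • w ^ (n + 1)‖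
      = ‖ordinaryHypergeometricCoefficient a b c (n + 1)‖ * ‖w ^ (n + 1)‖ := norm_smul _ _
    _ ≤ a₀ * b₀ / c₀ * ordinaryHypergeometricCoefficient (a₀ + 1) (b₀ + 1) (c₀ + 1) n *
          (r ^ n * ‖w‖) :=
        mul_le_mul hcoeff hpow (norm_nonneg _) ((norm_nonneg _).trans hcoeff)
    _ = _ := by rw [smul_eq_mul]; ring

end Coefficient

section Series

theorem one_le_ordinaryHypergeometricSeries_radius {𝕂 : Type*} (𝔸 : Type*) [RCLike 𝕂]
    [NormedDivisionRing 𝔸] [NormedAlgebra 𝕂 𝔸] (a b c : 𝕂) :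
    1 ≤ (ordinaryHypergeometricSeries 𝔸 a b c).radius := by
  by_cases h : ∀ k : ℕ, ↑k ≠ -a ∧ ↑k ≠ -b ∧ ↑k ≠ -c
  · exact (ordinaryHypergeometricSeries_radius_eq_one 𝔸 a b c h).ge
  · obtain ⟨k, hk⟩ : ∃ k : ℕ, ↑k = -a ∨ ↑k = -b ∨ ↑k = -c := by grind
    rw [FormalMultilinearSeries.radius_eq_top_of_forall_image_add_eq_zero _ (1 + k) fun n ↦
      ordinaryHypergeometricSeries_eq_zero_of_neg_nat a b c hk (by lia)]
    exact le_top

theorem hasSum_ordinaryHypergeometric {𝕂 𝔸 : Type*} [RCLike 𝕂] [NormedDivisionRing 𝔸]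
    [NormedAlgebra 𝕂 𝔸] [CompleteSpace 𝔸] (a b c : 𝕂) {w : 𝔸} (hw : ‖w‖ < 1) :
    HasSum (fun n ↦ ordinaryHypergeometricCoefficient a b c n • w ^ n) (₂F₁ a b c w) := by
  have hball : w ∈ Metric.eball 0 (ordinaryHypergeometricSeries 𝔸 a b c).radius := by
    refine Metric.eball_subset_eball (one_le_ordinaryHypergeometricSeries_radius 𝔸 a b c) ?_
    simpa [mem_eball_zero_iff, enorm_eq_nnnorm, ← NNReal.coe_lt_one] using hw
  exact ((ordinaryHypergeometricSeries 𝔸 a b c).hasSum hball).congr_fun fun n ↦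
    (ordinaryHypergeometricSeries_apply_eq a b c w n).symm

theorem ordinaryHypergeometric_sub_one {𝕂 𝔸 : Type*} [Field 𝕂] [Ring 𝔸] [Algebra 𝕂 𝔸]
    [TopologicalSpace 𝔸] [IsTopologicalRing 𝔸] [T2Space 𝔸] {a b c : 𝕂} {w : 𝔸}
    (h : Summable fun n ↦ ordinaryHypergeometricCoefficient a b c n • w ^ n) :
    ₂F₁ a b c w - 1 = ∑' n, ordinaryHypergeometricCoefficient a b c (n + 1) • w ^ (n + 1) := by
  rw [ordinaryHypergeometric, ordinaryHypergeometric_sum_eq, h.tsum_eq_zero_add,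
    ordinaryHypergeometricCoefficient_zero, one_smul, pow_zero, add_sub_cancel_left]

theorem gaussF_eq_ordinaryHypergeometric (a b c w : ℝ) : gaussF a b c w = ₂F₁ a b c w := by
  simp only [gaussF, poch_eq_ascPochhammer_eval, ordinaryHypergeometric_eq_tsum, smul_eq_mul]
  refine tsum_congr fun n ↦ ?_
  field

end Series

theorem stmt_16_general {𝕂 𝔸 : Type*} [RCLike 𝕂] [NormedRing 𝔸] [NormedAlgebra 𝕂 𝔸]
    [CompleteSpace 𝔸] {a b c : 𝕂} {w : 𝔸} {a₀ b₀ c₀ r : ℝ} (ha : ‖a‖ ≤ a₀) (hb : ‖b‖ ≤ b₀)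
    (hc₀ : 0 < c₀) (hc : c₀ ≤ RCLike.re c) (hw : ‖w‖ ≤ r) (hr : r < 1) :
    ‖₂F₁ a b c w - 1‖ ≤ a₀ * b₀ / c₀ * ₂F₁ (a₀ + 1) (b₀ + 1) (c₀ + 1) r * ‖w‖ := by
  have hr_norm : ‖r‖ < 1 := by rwa [Real.norm_of_nonneg ((norm_nonneg w).trans hw)]
  have hmajorant := ((hasSum_ordinaryHypergeometric (a₀ + 1) (b₀ + 1) (c₀ + 1) hr_norm).mul_left
    (a₀ * b₀ / c₀)).mul_right ‖w‖
  have hterm := norm_ordinaryHypergeometricCoefficient_succ_smul_pow_le ha hb hc₀ hc hw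
  have hsummable : Summable fun n ↦ ordinaryHypergeometricCoefficient a b c n • w ^ n :=
    (summable_nat_add_iff 1).mp (.of_norm_bounded hmajorant.summable hterm)
  rw [ordinaryHypergeometric_sub_one hsummable]
  exact tsum_of_norm_bounded hmajorant hterm

theorem stmt_16 (a₀ b₀ c₀ a b c w : ℝ) (ha₀ : 0 ≤ a₀) (hb₀ : 0 ≤ b₀)
    (hc₀ : 0 < c₀) (ha : |a| ≤ a₀) (hb : |b| ≤ b₀) (hc : c₀ ≤ c)
    (hw0 : 0 ≤ w) (hw : w ≤ 1 / 2) :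
    |gaussF a b c w - 1| ≤
      a₀ * b₀ / c₀ * gaussF (a₀ + 1) (b₀ + 1) (c₀ + 1) (1 / 2) * w := by
  simpa only [gaussF_eq_ordinaryHypergeometric, Real.norm_eq_abs, abs_of_nonneg hw0] using
    stmt_16_general ha hb hc₀ hc ((Real.norm_of_nonneg hw0).trans_le hw) one_half_lt_one
end
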